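/- Let (X,d,I) be a coarse interval space with parameters (φ,ψ) and induced operator μ. Set κ'' = ψ(φ(0) + ψ(φ(φ(0)))). Then for all a,b,c,d ∈ X, d(μ(a, μ(a,c,d), μ(b,c,d)), μ(a,c,d)) ≤ κ''. -/

import Mathlib

/-- The interval `[a,b]` associated to a ternary operator `μ`. -/
def cmInterval {X : Type*} (μ : X → X → X → X) (a b : X) : Set X :=
  {c | ∃ x, c = μ a x b}

/-- The closed `R`-neighbourhood of a set `A`. -/
def cmNbhd {X : Type*} [MetricSpace X] (R : ℝ) (A : Set X) : Set X :=
  {x | ∃ a ∈ A, dist x a ≤ R}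

/-- A coarse interval space with parameters `(φ, ψ)`. -/
structure IsCoarseIntervalSpace {X : Type*} [MetricSpace X]
    (I : X → X → Set X) (φ ψ : ℝ → ℝ) : Prop where
  I1a : ∀ a : X, I a a = {a}
  I1b : ∀ a b : X, I a b = I b a
  φ_mono : Monotone φ
  I2 : ∀ (R : ℝ) (a b c : X), c ∈ cmNbhd R (I a b) →
    I a c ⊆ cmNbhd (φ R) (I a b)
  ψ_mono : Monotone ψ
  I3ne : ∀ a b c : X, (I a b ∩ I b c ∩ I c a).Nonempty
  I3diam : ∀ (R : ℝ) (a b c x y : X),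
    x ∈ cmNbhd R (I a b) ∩ cmNbhd R (I b c) ∩ cmNbhd R (I c a) →
    y ∈ cmNbhd R (I a b) ∩ cmNbhd R (I b c) ∩ cmNbhd R (I c a) →
    dist x y ≤ ψ R

/-- An induced (ternary) operator of an interval map `I` : for all `a b c`,
`μ a b c` lies in `[a,b] ∩ [b,c] ∩ [c,a]` and is invariant under permutations. -/
def IsInducedOperator {X : Type*} (I : X → X → Set X) (μ : X → X → X → X) : Prop :=
  (∀ a b c : X, μ a b c ∈ I a b ∩ I b c ∩ I c a) ∧
  (∀ a b c : X, μ a b c = μ a c b) ∧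
  (∀ a b c : X, μ a b c = μ b a c)

/-!
Let `m` be a median of `a, c, d` and let `n ∈ [c,d]`. Choose a median `x` of `a, n, c` and then a
median `u` of `a, x, d`. Since `x` lies on `[a,n]`, `[n,c]` and `[c,a]`, axiom (I2) puts `u` close
to `[a,n]`, `[a,c]` and `[c,d]`, while `u ∈ [d,a]`. Being a coarse median of `a, c, d`, the point
`u` is close to `m` by (I3), so `m` is close to `[a,n]`. As `m` also belongs to `[a,m]` and
`[m,n]`, it is a coarse median of `a, m, n`, and (I3) applies once more.
-/

section Neighbourhood

variable {X : Type*} [MetricSpace X] {A : Set X} {R S : ℝ} {x y : X}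

theorem cmNbhd_mono (h : R ≤ S) : cmNbhd R A ⊆ cmNbhd S A :=
  fun _ ⟨z, hz, hxz⟩ => ⟨z, hz, hxz.trans h⟩

theorem subset_cmNbhd (hR : 0 ≤ R) : A ⊆ cmNbhd R A :=
  fun z hz => ⟨z, hz, (dist_self z).trans_le hR⟩

theorem mem_cmNbhd_add_of_dist_le (hx : x ∈ cmNbhd R A) (hyx : dist y x ≤ S) :
    y ∈ cmNbhd (R + S) A := by
  obtain ⟨z, hz, hxz⟩ := hx
  refine ⟨z, hz, ?_⟩
  calc
    dist y z ≤ dist y x + dist x z := dist_triangle y x z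
    _ ≤ S + R := add_le_add hyx hxz
    _ = R + S := add_comm S R

end Neighbourhood

/-- The medians of `a, b, c`: the common points of the three intervals they span, among which an
induced operator selects `μ a b c`. -/
def medians {X : Type*} (I : X → X → Set X) (a b c : X) : Set X :=
  I a b ∩ I b c ∩ I c a

section CoarseMedians

variable {X : Type*} [MetricSpace X] {I : X → X → Set X} {R : ℝ} {a b c : X}

/-- The `R`-coarse medians of `a, b, c`: the points within `R` of each of the three intervals they
span, that is, the set whose diameter axiom (I3) bounds by `ψ R`. -/
def coarseMedians (I : X → X → Set X) (R : ℝ) (a b c : X) : Set X :=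
  cmNbhd R (I a b) ∩ cmNbhd R (I b c) ∩ cmNbhd R (I c a)

theorem medians_subset_coarseMedians (hR : 0 ≤ R) :
    medians I a b c ⊆ coarseMedians I R a b c :=
  Set.inter_subset_inter (Set.inter_subset_inter (subset_cmNbhd hR) (subset_cmNbhd hR))
    (subset_cmNbhd hR)

end CoarseMedians

namespace IsCoarseIntervalSpace

variable {X : Type*} [MetricSpace X] {I : X → X → Set X} {φ ψ : ℝ → ℝ} {a b c d m n : X}

theorem right_mem (hI : IsCoarseIntervalSpace I φ ψ) (a b : X) : b ∈ I a b := by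
  obtain ⟨w, ⟨hab, hbb⟩, -⟩ := hI.I3ne a b b
  obtain rfl : w = b := by rwa [hI.I1a] at hbb
  exact hab

theorem left_mem (hI : IsCoarseIntervalSpace I φ ψ) (a b : X) : a ∈ I a b :=
  hI.I1b b a ▸ hI.right_mem b a

theorem interval_subset_cmNbhd (hI : IsCoarseIntervalSpace I φ ψ) (hc : c ∈ I a b) :
    I a c ⊆ cmNbhd (φ 0) (I a b) :=
  hI.I2 0 a b c (subset_cmNbhd le_rfl hc)

theorem φ_nonneg (hI : IsCoarseIntervalSpace I φ ψ) (a : X) {R : ℝ} (hR : 0 ≤ R) : 0 ≤ φ R := by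
  have ha : a ∈ I a a := hI.right_mem a a
  obtain ⟨y, -, hay⟩ := hI.I2 R a a a (subset_cmNbhd hR ha) ha
  exact dist_nonneg.trans hay

theorem exists_mem_cmNbhd_mem_coarseMedians (hI : IsCoarseIntervalSpace I φ ψ) (a : X)
    (hn : n ∈ I c d) :
    ∃ u ∈ cmNbhd (φ 0) (I a n), u ∈ coarseMedians I (φ (φ 0)) a c d := by
  obtain ⟨x, ⟨hx_an, hx_nc⟩, hx_ca⟩ := hI.I3ne a n c
  obtain ⟨u, ⟨hu_ax, hu_xd⟩, hu_da⟩ := hI.I3ne a x d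
  have hφ : 0 ≤ φ 0 := hI.φ_nonneg a le_rfl
  have hφφ : φ 0 ≤ φ (φ 0) := hI.φ_mono hφ
  have hu_ac : u ∈ cmNbhd (φ 0) (I a c) :=
    hI.interval_subset_cmNbhd (hI.I1b c a ▸ hx_ca) hu_ax
  have hx_dc : x ∈ cmNbhd (φ 0) (I d c) :=
    hI.I1b c d ▸ hI.interval_subset_cmNbhd hn (hI.I1b n c ▸ hx_nc)
  have hu_cd : u ∈ cmNbhd (φ (φ 0)) (I c d) :=
    hI.I1b d c ▸ hI.I2 (φ 0) d c x hx_dc (hI.I1b x d ▸ hu_xd)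
  exact ⟨u, hI.interval_subset_cmNbhd hx_an hu_ax,
    ⟨cmNbhd_mono hφφ hu_ac, hu_cd⟩, subset_cmNbhd (hφ.trans hφφ) hu_da⟩

theorem dist_le_of_mem_coarseMedians (hI : IsCoarseIntervalSpace I φ ψ) {R : ℝ} {x y : X}
    (hx : x ∈ coarseMedians I R a b c) (hy : y ∈ coarseMedians I R a b c) : dist x y ≤ ψ R :=
  hI.I3diam R a b c x y hx hy

theorem ψ_nonneg (hI : IsCoarseIntervalSpace I φ ψ) (a : X) {R : ℝ} (hR : 0 ≤ R) : 0 ≤ ψ R := by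
  have ha : a ∈ coarseMedians I R a a a :=
    have haa : a ∈ I a a := hI.right_mem a a
    medians_subset_coarseMedians hR ⟨⟨haa, haa⟩, haa⟩
  exact dist_nonneg.trans (hI.dist_le_of_mem_coarseMedians ha ha)

theorem mem_cmNbhd_of_mem_medians (hI : IsCoarseIntervalSpace I φ ψ)
    (hm : m ∈ medians I a c d) (hn : n ∈ I c d) :
    m ∈ cmNbhd (φ 0 + ψ (φ (φ 0))) (I a n) := by
  obtain ⟨u, hu_an, hu⟩ := hI.exists_mem_cmNbhd_mem_coarseMedians a hn
  have hφφ : 0 ≤ φ (φ 0) := hI.φ_nonneg a (hI.φ_nonneg a le_rfl)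
  exact mem_cmNbhd_add_of_dist_le hu_an
    (hI.dist_le_of_mem_coarseMedians (medians_subset_coarseMedians hφφ hm) hu)

end IsCoarseIntervalSpace

theorem stmt4_general {X : Type*} [MetricSpace X] {I : X → X → Set X} {φ ψ : ℝ → ℝ}
    (hI : IsCoarseIntervalSpace I φ ψ) {a c d m n p : X} (hm : m ∈ medians I a c d)
    (hn : n ∈ I c d) (hp : p ∈ medians I a m n) :
    dist p m ≤ ψ (φ 0 + ψ (φ (φ 0))) := by
  have hφ : 0 ≤ φ 0 := hI.φ_nonneg a le_rfl
  have hψ : 0 ≤ ψ (φ (φ 0)) := hI.ψ_nonneg a (hI.φ_nonneg a hφ)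
  have hR : 0 ≤ φ 0 + ψ (φ (φ 0)) := add_nonneg hφ hψ
  have hm' : m ∈ coarseMedians I (φ 0 + ψ (φ (φ 0))) a m n :=
    ⟨⟨subset_cmNbhd hR (hI.right_mem a m), subset_cmNbhd hR (hI.left_mem m n)⟩,
      hI.I1b a n ▸ hI.mem_cmNbhd_of_mem_medians hm hn⟩
  exact hI.dist_le_of_mem_coarseMedians (medians_subset_coarseMedians hR hp) hm'

/-- in a coarse interval space with parameters `(φ, ψ)` and
induced operator `μ`, with `κ'' = ψ (φ 0 + ψ (φ (φ 0)))`: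
`d(μ(a, μ(a,c,d), μ(b,c,d)), μ(a,c,d)) ≤ κ''`. -/
theorem stmt4 {X : Type*} [MetricSpace X] (I : X → X → Set X) (φ ψ : ℝ → ℝ)
    (μ : X → X → X → X) (hI : IsCoarseIntervalSpace I φ ψ)
    (hμ : IsInducedOperator I μ) :
    ∀ a b c d : X,
      dist (μ a (μ a c d) (μ b c d)) (μ a c d) ≤ ψ (φ 0 + ψ (φ (φ 0))) := by
  intro a b c d
  exact stmt4_general hI (hμ.1 a c d) (hμ.1 b c d).1.2 (hμ.1 a (μ a c d) (μ b c d))
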